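/- arXiv:2303.04447 — 2 statements merged into one kernel-verified Lean document; each statement's English description precedes it below -/
import Mathlib

section
/- Let g : ℝ^d → ℝ be measurable, supported on 𝓛, and integrable with respect to π. If X is a random vector with density π*, then E_{π*}[g(X)/S(X)] = (1/p̄) ∫_{ℝ^d} g(x) π(x) dx. -/
/-! The expectation becomes an integral over `ℝ^d` against the density `π*`, and the integrand
`π*(x) * (g(x) / S(x))` collapses pointwise to `g(x) π(x) / p̄`: on `𝓛` the factor `S(x)` is
nonzero and cancels, while off `𝓛` both sides vanish because `g` does. -/

open MeasureTheory ProbabilityTheory Set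

/-- Let `g : ℝ^d → ℝ` be measurable, supported on `𝓛`, and integrable with
respect to `π`. If `X` is a random vector with density `π*`, then
`E_{π*}[g(X)/S(X)] = (1/p̄) ∫ g(x) π(x) dx`. -/
theorem importance_sampling_single_expectation
    (d : ℕ) (hd : 1 ≤ d)
    (π : (Fin d → ℝ) → ℝ)
    (hπ_meas : Measurable π)
    (hπ_nonneg : ∀ x, 0 ≤ π x)
    (hπ_int : Integrable π)
    (hπ_prob : ∫ x, π x = 1)
    (v : Fin d → ℝ)
    (L : Fin d → Set (Fin d → ℝ))
    (hL : ∀ i, L i = {x | v i < x i})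
    (𝓛 : Set (Fin d → ℝ)) (h𝓛 : 𝓛 = ⋃ i, L i)
    (p : Fin d → ℝ) (hp : ∀ i, p i = ∫ x in L i, π x)
    (hp_pos : ∀ i, 0 < p i)
    (pbar : ℝ) (hpbar : pbar = ∑ i, p i)
    (S : (Fin d → ℝ) → ℝ)
    (hS : ∀ x, S x = ∑ j, (L j).indicator (fun _ => (1 : ℝ)) x)
    (πstar : (Fin d → ℝ) → ℝ)
    (hπstar : ∀ x, πstar x = S x * π x / pbar)
    (g : (Fin d → ℝ) → ℝ)
    (hg_meas : Measurable g)
    (hg_supp : ∀ x ∉ 𝓛, g x = 0)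
    (hg_int : Integrable (fun x => g x * π x))
    {Ω : Type*} [MeasureSpace Ω] [IsProbabilityMeasure (ℙ : Measure Ω)]
    (X : Ω → (Fin d → ℝ))
    (hX_meas : Measurable X)
    (hX_law : Measure.map X ℙ = volume.withDensity (fun x => ENNReal.ofReal (πstar x))) :
    ∫ ω, g (X ω) / S (X ω) = (1 / pbar) * ∫ x, g x * π x := by
  have hLm : ∀ i, MeasurableSet (L i) := fun i => by
    rw [hL i]
    exact measurableSet_lt measurable_const (measurable_pi_apply i)
  have hSm : Measurable S := by
    rw [funext hS]
    exact Finset.measurable_sum _ fun j _ => measurable_const.indicator (hLm j)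
  have hind : ∀ j x, 0 ≤ (L j).indicator (fun _ => (1 : ℝ)) x := fun j x =>
    indicator_nonneg (fun _ _ => zero_le_one) x
  have hS0 : ∀ x, 0 ≤ S x := fun x => by
    rw [hS]
    exact Finset.sum_nonneg fun j _ => hind j x
  have hSpos : ∀ x ∈ 𝓛, 0 < S x := fun x hx => by
    rw [h𝓛] at hx
    obtain ⟨i, hi⟩ := mem_iUnion.1 hx
    rw [hS]
    exact Finset.sum_pos' (fun j _ => hind j x) ⟨i, Finset.mem_univ i, by simp [hi]⟩
  have hpb : 0 ≤ pbar := by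
    rw [hpbar]
    exact Finset.sum_nonneg fun i _ => (hp_pos i).le
  have hπs0 : ∀ x, 0 ≤ πstar x := fun x => by
    rw [hπstar]
    exact div_nonneg (mul_nonneg (hS0 x) (hπ_nonneg x)) hpb
  have hπsm : Measurable πstar := by
    rw [funext hπstar]
    exact (hSm.mul hπ_meas).div_const _
  calc ∫ ω, g (X ω) / S (X ω)
      = ∫ x, g x / S x ∂(Measure.map X ℙ) :=
        (integral_map hX_meas.aemeasurable
          (hg_meas.div hSm).aestronglyMeasurable).symm
    _ = ∫ x, (ENNReal.ofReal (πstar x)).toReal • (g x / S x) := by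
        rw [hX_law]
        exact integral_withDensity_eq_integral_toReal_smul hπsm.ennreal_ofReal
          (Filter.Eventually.of_forall fun _ => ENNReal.ofReal_lt_top) _
    _ = ∫ x, (1 / pbar) * (g x * π x) := by
        congr 1
        funext x
        rw [ENNReal.toReal_ofReal (hπs0 x), smul_eq_mul, hπstar]
        by_cases hx : x ∈ 𝓛
        · have hne := (hSpos x hx).ne'
          field_simp
        · simp [hg_supp x hx]
    _ = (1 / pbar) * ∫ x, g x * π x := integral_const_mul _ _
end

section
/- The map φ(r1, r2, r3) = (r1 − r1 r2 − r2 r3, r2 − r1 r3 + r1 r2 r3, r3) is a bijection from the open cube (−1,1)³ onto the region {(θ1, θ2, θ3) ∈ ℝ³ : θ1 + θ2 + θ3 < 1, −θ1 + θ2 − θ3 < 1, θ3(θ3 − θ1) − θ2 < 1, |θ3| < 1}. -/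
/-!
Put `u = r1 * (1 - r2)`. For fixed `r3` the map is linear in `(u, r2)`, namely
`θ1 = u - r2 * r3`, `θ2 = r2 - u * r3`, with determinant `1 - r3 ^ 2 > 0`, so it is inverted by
`r2 = (θ2 + θ1 * θ3) / (1 - θ3 ^ 2)` and `r1 = (θ1 + θ2 * θ3) / (1 - θ2 - θ1 * θ3 - θ3 ^ 2)`.
The slacks in the inequalities of the region factor as
`1 - θ1 - θ2 - θ3 = (1 - r3) * (1 - r2) * (1 - r1)`,
`1 + θ1 - θ2 + θ3 = (1 + r3) * (1 - r2) * (1 + r1)`,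
`1 + θ2 - θ3 * (θ3 - θ1) = (1 - r3 ^ 2) * (1 + r2)`,
so the cube is carried into the region. Conversely the first two slacks, weighted by `1 + θ3` and
`1 - θ3`, add up to `2 * (1 - θ2 - θ1 * θ3 - θ3 ^ 2)`, which is therefore positive on the region;
this is the positivity of `1 - r2`, and the remaining bounds on `r1`, `r2` follow.
-/

open Set

/-- The map
`φ(r1, r2, r3) = (r1 − r1r2 − r2r3, r2 − r1r3 + r1r2r3, r3)` is a bijection from the open
cube `(−1,1)³` onto the region
`{(θ1, θ2, θ3) : θ1 + θ2 + θ3 < 1, −θ1 + θ2 − θ3 < 1, θ3(θ3 − θ1) − θ2 < 1, |θ3| < 1}`. -/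
theorem pacf_reparam_bijection_order3 :
    Set.BijOn
      (fun r : ℝ × ℝ × ℝ =>
        (r.1 - r.1 * r.2.1 - r.2.1 * r.2.2,
          r.2.1 - r.1 * r.2.2 + r.1 * r.2.1 * r.2.2,
          r.2.2))
      (Ioo (-1 : ℝ) 1 ×ˢ Ioo (-1 : ℝ) 1 ×ˢ Ioo (-1 : ℝ) 1)
      {θ : ℝ × ℝ × ℝ |
        θ.1 + θ.2.1 + θ.2.2 < 1 ∧ -θ.1 + θ.2.1 - θ.2.2 < 1 ∧
          θ.2.2 * (θ.2.2 - θ.1) - θ.2.1 < 1 ∧ |θ.2.2| < 1} := by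
  -- The denominator of the first coordinate of the inverse is `(1 - r3 ^ 2) * (1 - r2)`.
  refine InvOn.bijOn
    (f' := fun t : ℝ × ℝ × ℝ =>
      ((t.1 + t.2.1 * t.2.2) / (1 - t.2.1 - t.1 * t.2.2 - t.2.2 ^ 2),
        (t.2.1 + t.1 * t.2.2) / (1 - t.2.2 ^ 2), t.2.2)) ⟨?_, ?_⟩ ?_ ?_
  · rintro ⟨x, y, z⟩ ⟨-, ⟨-, hy⟩, hz, hz'⟩
    dsimp only at *
    have hc : 1 - z ^ 2 ≠ 0 := by nlinarith
    have hy0 : 1 - y ≠ 0 := by linarith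
    have hd : 1 - (y - x * z + x * y * z) - (x - x * y - y * z) * z - z ^ 2
        = (1 - z ^ 2) * (1 - y) := by ring
    rw [hd, Prod.mk.injEq, Prod.mk.injEq]
    refine ⟨?_, ?_, rfl⟩
    · rw [div_eq_iff (mul_ne_zero hc hy0)]; ring
    · rw [div_eq_iff hc]; ring
  · rintro ⟨a, b, c⟩ ⟨h1, h2, -, h4⟩
    dsimp only at *
    obtain ⟨hc1, hc2⟩ := abs_lt.mp h4
    have hc : 1 - c ^ 2 ≠ 0 := by nlinarith
    have hd : 1 - b - a * c - c ^ 2 ≠ 0 := by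
      nlinarith [mul_pos (sub_pos.2 h1) (show 0 < 1 + c by linarith),
        mul_pos (sub_pos.2 h2) (sub_pos.2 hc2)]
    rw [Prod.mk.injEq, Prod.mk.injEq]
    refine ⟨?_, ?_, rfl⟩ <;> field_simp <;> ring
  · rintro ⟨x, y, z⟩ ⟨⟨hx, hx'⟩, ⟨hy, hy'⟩, hz, hz'⟩
    dsimp only at *
    have px : 0 < 1 + x := by linarith
    have py : 0 < 1 + y := by linarith
    have pz : 0 < 1 + z := by linarith
    have qx := sub_pos.2 hx'
    have qy := sub_pos.2 hy'
    have qz := sub_pos.2 hz'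
    refine ⟨?_, ?_, ?_, abs_lt.2 ⟨hz, hz'⟩⟩ <;> dsimp only
    · linarith [mul_pos (mul_pos qz qy) qx]
    · linarith [mul_pos (mul_pos pz qy) px]
    · linarith [mul_pos (mul_pos pz qz) py]
  · rintro ⟨a, b, c⟩ ⟨h1, h2, h3, h4⟩
    dsimp only at *
    obtain ⟨hc1, hc2⟩ := abs_lt.mp h4
    have pc : 0 < 1 + c := by linarith
    have qc := sub_pos.2 hc2
    have hc : 0 < 1 - c ^ 2 := by nlinarith
    have e1 := mul_pos (sub_pos.2 h1) pc
    have e2 := mul_pos (sub_pos.2 h2) qc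
    have hd : 0 < 1 - b - a * c - c ^ 2 := by linarith
    refine ⟨⟨?_, ?_⟩, ⟨?_, ?_⟩, hc1, hc2⟩ <;> dsimp only
    · rw [lt_div_iff₀ hd]
      -- the difference of the two sides is `(1 - c) * (1 + a - b + c)`
      linarith
    · rw [div_lt_iff₀ hd]
      -- the difference of the two sides is `(1 + c) * (1 - a - b - c)`
      linarith
    · rw [lt_div_iff₀ hc]; linarith
    · rw [div_lt_iff₀ hc]; linarith
end
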